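/- Let K be a compact subset of ℝ^N, X a compact Hausdorff space, and T, A : C(K) → C(X) weakly nonlinear and monotone operators. Fix α ≥ α(K,u), and set p = Σ_{k=1}^N (pr_k + α)² ∈ C(K) and q_k = −pr_k − α ∈ C(K). Then for every f ∈ C(K) and every ε > 0 there exists δ > 0 such that ‖T(f)·A(1) − T(1)·A(f)‖ ≤ ε·‖T(1)‖·‖A(1)‖ + δ·{ ‖A(1)‖·‖T(p) − A(p)‖ + ‖A(p)‖·‖T(1) − A(1)‖ + 2·‖A(1)·A(p) − Σ_{k=1}^N (A(q_k))²‖ + 2·Σ_{k=1}^N ‖A(q_k)‖·‖T(q_k) − A(q_k)‖ }, where ‖·‖ is the sup-norm on C(X). -/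

import Mathlib

/-- The restriction to `K ⊆ ℝ^N` of the `k`-th coordinate projection, as a continuous map. -/
noncomputable def coordCM {N : ℕ} (K : Set (EuclideanSpace ℝ (Fin N))) (k : Fin N) : C(K, ℝ) :=
  ⟨fun x => (x : EuclideanSpace ℝ (Fin N)) k,
    (EuclideanSpace.proj k).continuous.comp continuous_subtype_val⟩

/-- The deficit of positivity `α(K, u)` of `K ⊆ ℝ^N` in the direction `u = (1, …, 1)`:
the infimum of all `α ≥ 0` with `K + αu ⊆ ℝ₊^N`. -/
noncomputable def posDeficit {N : ℕ} (K : Set (EuclideanSpace ℝ (Fin N))) : ℝ :=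
  sInf {a : ℝ | 0 ≤ a ∧ ∀ x ∈ K, ∀ k : Fin N, 0 ≤ x k + a}

/-- `p = Σ_{k=1}^N (pr_k + α)²` as an element of `C(K)`. -/
noncomputable def testP {N : ℕ} (K : Set (EuclideanSpace ℝ (Fin N))) (α : ℝ) : C(K, ℝ) :=
  ∑ k : Fin N, (coordCM K k + ContinuousMap.const K α) ^ 2

/-- `q_k = −pr_k − α` as an element of `C(K)`. -/
noncomputable def testQ {N : ℕ} (K : Set (EuclideanSpace ℝ (Fin N))) (α : ℝ) (k : Fin N) :
    C(K, ℝ) :=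
  -(coordCM K k) - ContinuousMap.const K α

/-- sublinear, translatable, monotone functional -/
structure WNF {Y : Type*} [TopologicalSpace Y] (φ : C(Y, ℝ) → ℝ) : Prop where
  sub : ∀ f g, φ (f + g) ≤ φ f + φ g
  pos : ∀ a : ℝ, 0 ≤ a → ∀ f, φ (a • f) = a * φ f
  tr : ∀ f, ∀ a : ℝ, 0 ≤ a → φ (f + a • 1) = φ f + a * φ 1
  mono : Monotone φ

namespace WNF
variable {Y : Type*} [TopologicalSpace Y] {φ ψ : C(Y, ℝ) → ℝ}

lemma zero (h : WNF φ) : φ 0 = 0 := by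
  have := h.pos 0 le_rfl 0
  simpa using this

lemma trr (h : WNF φ) (f : C(Y, ℝ)) (a : ℝ) : φ (f + a • 1) = φ f + a * φ 1 := by
  rcases le_total 0 a with ha | ha
  · exact h.tr f a ha
  · have := h.tr (f + a • 1) (-a) (by linarith)
    have e : f + a • (1 : C(Y, ℝ)) + (-a) • 1 = f := by
      ext x; simp
    rw [e] at this
    linarith

lemma cst (h : WNF φ) (a : ℝ) : φ (a • 1) = a * φ 1 := by
  have := h.trr 0 a
  simpa [h.zero] using this

lemma sum (h : WNF φ) {ι : Type*} (s : Finset ι) (e : ι → ℝ) (he : ∀ k, 0 ≤ e k)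
    (q : ι → C(Y, ℝ)) : φ (∑ k ∈ s, e k • q k) ≤ ∑ k ∈ s, e k * φ (q k) := by
  classical
  induction s using Finset.induction_on with
  | empty => simp [h.zero]
  | insert a s ha ih =>
    rw [Finset.sum_insert ha, Finset.sum_insert ha]
    have := h.sub (e a • q a) (∑ k ∈ s, e k • q k)
    rw [h.pos _ (he a)] at this
    linarith

lemma comb (h : WNF φ) {ι : Type*} (s : Finset ι) (e : ι → ℝ) (he : ∀ k, 0 ≤ e k)
    (q : ι → C(Y, ℝ)) (c d b : ℝ) (hc : 0 ≤ c) (hd : 0 ≤ d) (f p : C(Y, ℝ)) :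
    φ (c • f + d • p + ∑ k ∈ s, e k • q k + b • 1) ≤
      c * φ f + d * φ p + ∑ k ∈ s, e k * φ (q k) + b * φ 1 := by
  rw [h.trr]
  have h1 := h.sub (c • f + d • p) (∑ k ∈ s, e k • q k)
  have h2 := h.sub (c • f) (d • p)
  rw [h.pos _ hc, h.pos _ hd] at h2
  have := h.sum s e he q
  linarith

lemma one_sided (hφ : WNF φ) (hψ : WNF ψ) {ι : Type*} [Fintype ι] (q : ι → C(Y, ℝ))
    (hq : ∀ k y, q k y ≤ 0) (f p : C(Y, ℝ)) (ε δ : ℝ) (hδ : 0 ≤ δ)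
    (H : ∀ x y, f x ≤ f y + ε + δ * (p x + p y - 2 * ∑ k, q k x * q k y)) :
    φ f * ψ 1 ≤ φ 1 * ψ f + ε * φ 1 * ψ 1 +
      δ * (φ p * ψ 1 + φ 1 * ψ p - 2 * ∑ k, φ (q k) * ψ (q k)) := by
  have h1 : ∀ y, φ f ≤ δ * φ p + ∑ k, (2 * δ * (- q k y)) * φ (q k) +
      (f y + ε + δ * p y) * φ 1 := by
    intro y
    have := hφ.comb Finset.univ (fun k => 2 * δ * (- q k y))
      (fun k => mul_nonneg (by linarith) (by linarith [hq k y])) q 0 δ (f y + ε + δ * p y)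
      le_rfl hδ f p
    refine (hφ.mono ?_).trans (this.trans_eq (by ring))
    refine ContinuousMap.le_def.2 fun x => ?_
    have := H x y
    simp only [ContinuousMap.add_apply, ContinuousMap.smul_apply, ContinuousMap.sum_apply,
      ContinuousMap.one_apply, smul_eq_mul]
    have e : ∑ k, 2 * δ * (- q k y) * q k x = - (2 * δ * ∑ k, q k x * q k y) := by
      rw [Finset.mul_sum, ← Finset.sum_neg_distrib]
      exact Finset.sum_congr rfl fun k _ => by ring
    rw [e]; linarith
  have hφ1 : 0 ≤ φ 1 := by
    rw [← hφ.zero]; exact hφ.mono (fun x => by simp)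
  have hφq : ∀ k, φ (q k) ≤ 0 := fun k => by
    rw [← hφ.zero]; exact hφ.mono (fun x => by simpa using hq k x)
  have h2 := hψ.comb Finset.univ (fun k => 2 * δ * (- φ (q k)))
      (fun k => mul_nonneg (by linarith) (by linarith [hφq k])) q (φ 1) (δ * φ 1)
      (ε * φ 1 + δ * φ p) hφ1 (mul_nonneg hδ hφ1) f p
  have h3 : ψ (φ f • 1) ≤ _ := (hψ.mono (by
    refine ContinuousMap.le_def.2 fun y => ?_
    have := h1 y
    simp only [ContinuousMap.add_apply, ContinuousMap.smul_apply, ContinuousMap.sum_apply,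
      ContinuousMap.one_apply, smul_eq_mul]
    have e : ∑ k, 2 * δ * (- φ (q k)) * q k y = ∑ k, (2 * δ * (- q k y)) * φ (q k) :=
      Finset.sum_congr rfl fun k _ => by ring
    rw [e]; linarith)).trans h2
  rw [hψ.cst] at h3
  have e : ∑ k, 2 * δ * (- φ (q k)) * ψ (q k) = - (2 * δ * ∑ k, φ (q k) * ψ (q k)) := by
    rw [Finset.mul_sum, ← Finset.sum_neg_distrib]
    exact Finset.sum_congr rfl fun k _ => by ring
  rw [e] at h3
  linarith

end WNF

lemma coord_add_nonneg {N : ℕ} (K : Set (EuclideanSpace ℝ (Fin N))) [CompactSpace K]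
    (α : ℝ) (hα : posDeficit K ≤ α) (x : K) (k : Fin N) :
    0 ≤ (x : EuclideanSpace ℝ (Fin N)) k + α := by
  have : -(x : EuclideanSpace ℝ (Fin N)) k ≤ posDeficit K := by
    refine le_csInf ⟨∑ k, ‖coordCM K k‖, Finset.sum_nonneg fun _ _ => norm_nonneg _, ?_⟩ ?_
    · intro y hy j
      have h1 := (coordCM K j).norm_coe_le_norm ⟨y, hy⟩
      have h2 : ‖coordCM K j‖ ≤ ∑ k, ‖coordCM K k‖ :=
        Finset.single_le_sum (f := fun k => ‖coordCM K k‖)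
          (fun _ _ => norm_nonneg _) (Finset.mem_univ j)
      have h3 : -‖coordCM K j ⟨y, hy⟩‖ ≤ y j := neg_abs_le _
      linarith
    · rintro a ⟨_, h⟩
      linarith [h x x.2 k]
  linarith

lemma exists_delta {N : ℕ} (K : Set (EuclideanSpace ℝ (Fin N))) [CompactSpace K]
    (f : C(K, ℝ)) {ε : ℝ} (hε : 0 < ε) :
    ∃ δ : ℝ, 0 < δ ∧ ∀ x y : K, f x ≤ f y + ε + δ * ∑ k : Fin N,
      ((x : EuclideanSpace ℝ (Fin N)) k - (y : EuclideanSpace ℝ (Fin N)) k) ^ 2 := by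
  obtain ⟨η, hη, h⟩ := Metric.uniformContinuous_iff.1
    (CompactSpace.uniformContinuous_of_continuous f.continuous) ε hε
  refine ⟨2 * ‖f‖ / η ^ 2 + 1, by positivity, fun x y => ?_⟩
  have e : ∑ k : Fin N, ((x : EuclideanSpace ℝ (Fin N)) k - (y : EuclideanSpace ℝ (Fin N)) k) ^ 2
      = dist x y ^ 2 := by
    rw [Subtype.dist_eq, EuclideanSpace.dist_eq, Real.sq_sqrt (by positivity)]
    exact Finset.sum_congr rfl fun k _ => by rw [Real.dist_eq, sq_abs]
  rw [e]
  by_cases hd : dist x y < η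
  · have h1 := h hd
    rw [Real.dist_eq] at h1
    have h2 := (abs_lt.1 h1).2
    have : 0 ≤ (2 * ‖f‖ / η ^ 2 + 1) * dist x y ^ 2 := by positivity
    linarith
  · have h1 : η ^ 2 ≤ dist x y ^ 2 := by
      gcongr; exact not_lt.1 hd
    have h2 : 2 * ‖f‖ ≤ (2 * ‖f‖ / η ^ 2 + 1) * dist x y ^ 2 := by
      calc 2 * ‖f‖ = 2 * ‖f‖ / η ^ 2 * η ^ 2 := by field_simp
        _ ≤ (2 * ‖f‖ / η ^ 2 + 1) * dist x y ^ 2 := by gcongr; linarith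
    have h3 := (le_abs_self _).trans (f.norm_coe_le_norm x)
    have h4 := (neg_le_abs _).trans (f.norm_coe_le_norm y)
    linarith

/-- **The a priori estimate (Corollary 1), sup-norm form.** For weakly nonlinear and monotone
operators `T, A : C(K) → C(X)` and `α ≥ α(K,u)`, every `f ∈ C(K)` and `ε > 0` admit a
`δ > 0` such that the displayed inequality between sup-norms holds. -/
theorem norm_a_priori_estimate
    {N : ℕ} (K : Set (EuclideanSpace ℝ (Fin N))) [CompactSpace K]
    {X : Type*} [TopologicalSpace X] [CompactSpace X] [T2Space X]
    (T A : C(K, ℝ) → C(X, ℝ))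
    (hTsub : ∀ f g : C(K, ℝ), T (f + g) ≤ T f + T g)
    (hTpos : ∀ (a : ℝ), 0 ≤ a → ∀ f : C(K, ℝ), T (a • f) = a • T f)
    (hTtr : ∀ f : C(K, ℝ), ∀ a : ℝ, 0 ≤ a → T (f + a • 1) = T f + a • T 1)
    (hTmono : Monotone T)
    (hAsub : ∀ f g : C(K, ℝ), A (f + g) ≤ A f + A g)
    (hApos : ∀ (a : ℝ), 0 ≤ a → ∀ f : C(K, ℝ), A (a • f) = a • A f)
    (hAtr : ∀ f : C(K, ℝ), ∀ a : ℝ, 0 ≤ a → A (f + a • 1) = A f + a • A 1)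
    (hAmono : Monotone A)
    (α : ℝ) (hα : posDeficit K ≤ α)
    (f : C(K, ℝ)) {ε : ℝ} (hε : 0 < ε) :
    ∃ δ : ℝ, 0 < δ ∧
      ‖T f * A 1 - T 1 * A f‖ ≤
        ε * ‖T 1‖ * ‖A 1‖ +
        δ * (‖A 1‖ * ‖T (testP K α) - A (testP K α)‖ +
             ‖A (testP K α)‖ * ‖T 1 - A 1‖ +
             2 * ‖A 1 * A (testP K α) - ∑ k : Fin N, (A (testQ K α k)) ^ 2‖ +
             2 * ∑ k : Fin N, ‖A (testQ K α k)‖ * ‖T (testQ K α k) - A (testQ K α k)‖) := by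
  obtain ⟨δ, hδ, hf⟩ := exists_delta K f hε
  refine ⟨δ, hδ, ?_⟩
  set p := testP K α with hp
  set q := testQ K α with hqd
  have hqv : ∀ k x, q k x = -(x : EuclideanSpace ℝ (Fin N)) k - α := fun k x => rfl
  have hpv : ∀ x : K, p x = ∑ k, ((x : EuclideanSpace ℝ (Fin N)) k + α) ^ 2 := fun x => by
    simp [hp, testP, coordCM]
    rfl
  have hq : ∀ k y, q k y ≤ 0 := fun k y => by
    rw [hqv]; linarith [coord_add_nonneg K α hα y k]
  have H : ∀ x y, f x ≤ f y + ε + δ * (p x + p y - 2 * ∑ k, q k x * q k y) := by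
    intro x y
    refine (hf x y).trans_eq ?_
    congr 2
    rw [hpv, hpv, Finset.mul_sum, ← Finset.sum_add_distrib, ← Finset.sum_sub_distrib]
    exact Finset.sum_congr rfl fun k _ => by rw [hqv, hqv]; ring
  refine (ContinuousMap.norm_le _ (by positivity)).2 fun t => ?_
  have wT : WNF (fun g => T g t) :=
    ⟨fun f g => hTsub f g t, fun a ha f => by simp [hTpos a ha f],
      fun f a ha => by simp [hTtr f a ha], fun f g h => hTmono h t⟩
  have wA : WNF (fun g => A g t) :=
    ⟨fun f g => hAsub f g t, fun a ha f => by simp [hApos a ha f],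
      fun f a ha => by simp [hAtr f a ha], fun f g h => hAmono h t⟩
  have i1 := wT.one_sided wA q hq f p ε δ hδ.le H
  have i2 := wA.one_sided wT q hq f p ε δ hδ.le H
  have hsw : ∑ k, A (q k) t * T (q k) t = ∑ k, T (q k) t * A (q k) t :=
    Finset.sum_congr rfl fun k _ => mul_comm _ _
  rw [hsw] at i2
  have nb : ∀ g : C(X, ℝ), |g t| ≤ ‖g‖ := fun g => g.norm_coe_le_norm t
  have mb : ∀ g h : C(X, ℝ), g t * h t ≤ ‖g‖ * ‖h‖ := fun g h =>
    (le_abs_self _).trans (by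
      rw [abs_mul]; exact mul_le_mul (nb g) (nb h) (abs_nonneg _) (norm_nonneg _))
  have b0 := mul_le_mul_of_nonneg_left (mb (T 1) (A 1)) hε.le
  have b1 := mb (A 1) (T p - A p)
  have b2 := mb (A p) (T 1 - A 1)
  have b3 := (le_abs_self _).trans (nb (A 1 * A p - ∑ k, (A (q k)) ^ 2))
  have b4 : ∑ k, A (q k) t * (A (q k) t - T (q k) t) ≤
      ∑ k, ‖A (q k)‖ * ‖T (q k) - A (q k)‖ := Finset.sum_le_sum fun k _ => by
    rw [norm_sub_rev]; exact mb (A (q k)) (A (q k) - T (q k))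
  simp only [ContinuousMap.sub_apply, ContinuousMap.mul_apply, ContinuousMap.sum_apply,
    ContinuousMap.pow_apply] at b1 b2 b3
  have b4' : ∑ k, A (q k) t * (A (q k) t - T (q k) t) =
      ∑ k, A (q k) t ^ 2 - ∑ k, T (q k) t * A (q k) t := by
    rw [← Finset.sum_sub_distrib]
    exact Finset.sum_congr rfl fun k _ => by ring
  have D : T p t * A 1 t + T 1 t * A p t - 2 * ∑ k, T (q k) t * A (q k) t ≤
      ‖A 1‖ * ‖T p - A p‖ + ‖A p‖ * ‖T 1 - A 1‖ +
        2 * ‖A 1 * A p - ∑ k, (A (q k)) ^ 2‖ +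
        2 * ∑ k, ‖A (q k)‖ * ‖T (q k) - A (q k)‖ := by
    linarith
  have D' := mul_le_mul_of_nonneg_left D hδ.le
  rw [Real.norm_eq_abs, abs_le]
  simp only [ContinuousMap.sub_apply, ContinuousMap.mul_apply]
  constructor <;> linarith
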